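/- Let G = (V, E) be a finite simple loopless biconnected graph (connected and G − v connected for every vertex v) with at least one edge. The following are equivalent: (1) P(G) ∩ 2M(G) = P(G); (2) for every choice of edge weights c with 0 < c_e < ∞ for all e, the resistance curvature satisfies p_v(c) > 0 for all v ∈ V; (3) G is a cycle graph on n ≥ 3 vertices or G is a single edge K₂. -/

import Mathlib

open scoped Classical

namespace RCurv

variable {V : Type*} [Fintype V] [DecidableEq V]

/-- `T` is (the edge set of) a spanning tree of `G`. -/
def IsSpanningTree (G : SimpleGraph V) (T : Finset (Sym2 V)) : Prop :=
  (T : Set (Sym2 V)) ⊆ G.edgeSet ∧ (SimpleGraph.fromEdgeSet (T : Set (Sym2 V))).IsTree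

/-- The finite set of all spanning trees of `G`. -/
noncomputable def spanningTrees (G : SimpleGraph V) : Finset (Finset (Sym2 V)) :=
  Finset.univ.filter fun T => IsSpanningTree G T

/-- The relative resistance `r_e(c)` of an edge `e`. -/
noncomputable def relRes (G : SimpleGraph V) (c : Sym2 V → ℝ) (e : Sym2 V) : ℝ :=
  (∑ T ∈ (spanningTrees G).filter (fun T => e ∈ T), ∏ t ∈ T, c t) /
    (∑ T ∈ spanningTrees G, ∏ t ∈ T, c t)

/-- The resistance curvature `p_v(c)` of a vertex `v`. -/
noncomputable def curv (G : SimpleGraph V) (c : Sym2 V → ℝ) (v : V) : ℝ :=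
  1 - (1 / 2) * ∑ u ∈ G.neighborFinset v, relRes G c s(u, v)

/-- `G` is resistance nonnegative. -/
def IsRN (G : SimpleGraph V) : Prop :=
  ∃ c : Sym2 V → ℝ, (∀ e ∈ G.edgeSet, 0 < c e) ∧ ∀ v : V, 0 ≤ curv G c v

/-- `G` is resistance positive. -/
def IsRP (G : SimpleGraph V) : Prop :=
  ∃ c : Sym2 V → ℝ, (∀ e ∈ G.edgeSet, 0 < c e) ∧ ∀ v : V, 0 < curv G c v

/-- The indicator vector of a finite edge set, as a vector in `ℝ^{Sym2 V}`. -/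
noncomputable def indVec (T : Finset (Sym2 V)) : Sym2 V → ℝ := fun e => if e ∈ T then 1 else 0

/-- The spanning tree polytope `P(G)`. -/
noncomputable def stPolytope (G : SimpleGraph V) : Set (Sym2 V → ℝ) :=
  convexHull ℝ {x | ∃ T ∈ spanningTrees G, x = indVec T}

/-- `M` is a matching of `G`. -/
def IsMatching' (G : SimpleGraph V) (M : Finset (Sym2 V)) : Prop :=
  (M : Set (Sym2 V)) ⊆ G.edgeSet ∧ ∀ v : V, (M.filter fun e => v ∈ e).card ≤ 1

/-- The matching polytope `M(G)`. -/
noncomputable def matchingPolytope (G : SimpleGraph V) : Set (Sym2 V → ℝ) :=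
  convexHull ℝ {x | ∃ M : Finset (Sym2 V), IsMatching' G M ∧ x = indVec M}

/-- A Hamiltonian path: a spanning tree in which every vertex has degree at most `2`. -/
def IsHamPath (G : SimpleGraph V) (H : Finset (Sym2 V)) : Prop :=
  IsSpanningTree G H ∧ ∀ v : V, (H.filter fun e => v ∈ e).card ≤ 2

lemma dg_eq (G : SimpleGraph V) (T : Finset (Sym2 V)) (hT : (T : Set (Sym2 V)) ⊆ G.edgeSet) (v : V) :
    ∑ u ∈ G.neighborFinset v, (if s(u, v) ∈ T then (1 : ℝ) else 0)
      = ((T.filter fun e => v ∈ e).card : ℝ) := by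
  rw [Finset.sum_boole]
  congr 1
  refine Finset.card_bij (fun u _ => s(u, v)) ?_ ?_ ?_
  · intro u hu
    simp only [Finset.mem_filter] at hu ⊢
    exact ⟨hu.2, by simp⟩
  · intro a _ b _ h
    simp at h
    rcases h with h | h
    · exact h
    · exact h.1.trans h.2
  · intro e he
    simp only [Finset.mem_filter] at he
    obtain ⟨he, hv⟩ := he
    obtain ⟨w, rfl⟩ := Sym2.mem_iff_exists.1 hv
    refine ⟨w, ?_, Sym2.eq_swap⟩
    have := hT he
    simp only [Finset.mem_filter, SimpleGraph.mem_neighborFinset]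
    exact ⟨this, by rwa [Sym2.eq_swap]⟩

lemma mem_spanningTrees {G : SimpleGraph V} {T : Finset (Sym2 V)} :
    T ∈ spanningTrees G ↔ IsSpanningTree G T := by
  simp [spanningTrees]

/-- a subgraph tree gives a spanning tree -/
lemma exists_tree_of_le {G H : SimpleGraph V} (hle : H ≤ G) (hH : H.IsTree) :
    ∃ T : Finset (Sym2 V), IsSpanningTree G T ∧ ∀ e, e ∈ T ↔ e ∈ H.edgeSet := by
  refine ⟨H.edgeSet.toFinset, ⟨?_, ?_⟩, ?_⟩
  · simpa using hle
  · simpa using hH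
  · simp

lemma spanningTrees_nonempty {G : SimpleGraph V} (hG : G.Connected) :
    (spanningTrees G).Nonempty := by
  obtain ⟨H, hle, hH⟩ := hG.exists_isTree_le
  obtain ⟨T, hT, -⟩ := exists_tree_of_le hle hH
  exact ⟨T, mem_spanningTrees.2 hT⟩

lemma w_pos {G : SimpleGraph V} {c : Sym2 V → ℝ} (hc : ∀ e ∈ G.edgeSet, 0 < c e)
    {T : Finset (Sym2 V)} (hT : T ∈ spanningTrees G) : 0 < ∏ t ∈ T, c t :=
  Finset.prod_pos fun t ht => hc t ((mem_spanningTrees.1 hT).1 ht)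

lemma Z_pos {G : SimpleGraph V} (hG : G.Connected) {c : Sym2 V → ℝ}
    (hc : ∀ e ∈ G.edgeSet, 0 < c e) : 0 < ∑ T ∈ spanningTrees G, ∏ t ∈ T, c t :=
  Finset.sum_pos (fun _ hT => w_pos hc hT) (spanningTrees_nonempty hG)

lemma curv_eq {G : SimpleGraph V} (hG : G.Connected) {c : Sym2 V → ℝ}
    (hc : ∀ e ∈ G.edgeSet, 0 < c e) (v : V) :
    curv G c v = (∑ T ∈ spanningTrees G,
      (2 - ((T.filter fun e => v ∈ e).card : ℝ)) * ∏ t ∈ T, c t) /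
      (2 * ∑ T ∈ spanningTrees G, ∏ t ∈ T, c t) := by
  have hZ := Z_pos hG hc
  have h1 : ∑ u ∈ G.neighborFinset v, relRes G c s(u, v) =
      (∑ T ∈ spanningTrees G, ((T.filter fun e => v ∈ e).card : ℝ) * ∏ t ∈ T, c t) /
        (∑ T ∈ spanningTrees G, ∏ t ∈ T, c t) := by
    unfold relRes
    rw [← Finset.sum_div]
    congr 1
    simp_rw [Finset.sum_filter]
    rw [Finset.sum_comm]
    refine Finset.sum_congr rfl fun T hT => ?_
    rw [← dg_eq G T (mem_spanningTrees.1 hT).1, Finset.sum_mul]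
    refine Finset.sum_congr rfl fun u _ => ?_
    split_ifs <;> simp
  unfold curv
  rw [h1]
  simp_rw [sub_mul, Finset.sum_sub_distrib, ← Finset.mul_sum]
  field_simp

lemma curv_pos_iff {G : SimpleGraph V} (hG : G.Connected) {c : Sym2 V → ℝ}
    (hc : ∀ e ∈ G.edgeSet, 0 < c e) (v : V) :
    0 < curv G c v ↔ 0 < ∑ T ∈ spanningTrees G,
      (2 - ((T.filter fun e => v ∈ e).card : ℝ)) * ∏ t ∈ T, c t := by
  rw [curv_eq hG hc]
  have hZ := Z_pos hG hc
  rw [div_pos_iff_of_pos_right (by positivity)]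

lemma tree_subset_eq {G : SimpleGraph V} {S T : Finset (Sym2 V)} (hS : IsSpanningTree G S)
    (hT : IsSpanningTree G T) (h : S ⊆ T) : S = T := by
  have hm := SimpleGraph.isTree_iff_minimal_connected.1 hT.2
  have hle : SimpleGraph.fromEdgeSet (S : Set (Sym2 V)) ≤ SimpleGraph.fromEdgeSet (T : Set (Sym2 V)) :=
    SimpleGraph.fromEdgeSet_mono (by exact_mod_cast h)
  have h2 := hm.2 hS.2.connected hle
  refine h.antisymm ?_
  intro e he
  have hed := hT.1 he
  induction e with
  | _ a b =>
    have : (SimpleGraph.fromEdgeSet (S : Set (Sym2 V))).Adj a b :=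
      h2 ((SimpleGraph.fromEdgeSet_adj _).2 ⟨he, G.ne_of_adj hed⟩)
    exact ((SimpleGraph.fromEdgeSet_adj _).1 this).1

/-- (2) implies all spanning trees are Hamiltonian paths. -/
lemma tree_of_curv {G : SimpleGraph V} (hG : G.Connected)
    (h : ∀ c : Sym2 V → ℝ, (∀ e ∈ G.edgeSet, 0 < c e) → ∀ v : V, 0 < curv G c v)
    {S : Finset (Sym2 V)} (hS : IsSpanningTree G S) (v : V) :
    (S.filter fun e => v ∈ e).card ≤ 2 := by
  let f : ℝ → ℝ := fun x => ∑ T ∈ spanningTrees G,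
      (2 - ((T.filter fun e => v ∈ e).card : ℝ)) * ∏ t ∈ T, (if t ∈ S then 1 else x)
  have hf : Continuous f := by
    refine continuous_finsetSum _ fun T _ => Continuous.mul continuous_const ?_
    refine continuous_finsetProd _ fun t _ => ?_
    change Continuous fun x : ℝ => if t ∈ S then (1 : ℝ) else x
    by_cases ht : t ∈ S
    · simp only [if_pos ht]; exact continuous_const
    · simp only [if_neg ht]; exact continuous_id
  have hpos : ∀ x > 0, 0 ≤ f x := by
    intro x hx
    have hc : ∀ e ∈ G.edgeSet, 0 < (fun t => if t ∈ S then (1 : ℝ) else x) e := by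
      intro e _
      dsimp only
      split_ifs <;> [exact one_pos; exact hx]
    exact ((curv_pos_iff hG hc v).1 (h _ hc v)).le
  have h0 : 0 ≤ f 0 := by
    have ht : Filter.Tendsto f (nhdsWithin 0 (Set.Ioi 0)) (nhds (f 0)) :=
      (hf.tendsto 0).mono_left nhdsWithin_le_nhds
    refine ge_of_tendsto ht ?_
    filter_upwards [self_mem_nhdsWithin] with x hx using hpos x hx
  have hf0 : f 0 = 2 - ((S.filter fun e => v ∈ e).card : ℝ) := by
    simp only [f]
    rw [Finset.sum_eq_single_of_mem S (mem_spanningTrees.2 hS)]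
    · rw [Finset.prod_eq_one (fun t ht => by simp [ht]), mul_one]
    · intro T hT hne
      have : ¬ T ⊆ S := fun hh => hne (tree_subset_eq (mem_spanningTrees.1 hT) hS hh)
      obtain ⟨t, ht, hts⟩ := Finset.not_subset.1 this
      rw [Finset.prod_eq_zero ht (by simp [hts]), mul_zero]
  rw [hf0] at h0
  have : ((S.filter fun e => v ∈ e).card : ℝ) ≤ 2 := by linarith
  exact_mod_cast this

/-- the sum of coordinates at `v`, as a linear map -/
noncomputable def starSum (v : V) : (Sym2 V → ℝ) →ₗ[ℝ] ℝ :=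
  ∑ e ∈ Finset.univ.filter (fun e : Sym2 V => v ∈ e), LinearMap.proj e

lemma starSum_indVec (v : V) (T : Finset (Sym2 V)) :
    starSum v (indVec T) = ((T.filter fun e => v ∈ e).card : ℝ) := by
  simp only [starSum, LinearMap.sum_apply, LinearMap.proj_apply, indVec]
  rw [Finset.sum_boole]
  congr 2
  ext e
  simp [and_comm]

open scoped Pointwise in
lemma tree_of_polytope {G : SimpleGraph V}
    (h : stPolytope G ∩ (2 : ℝ) • matchingPolytope G = stPolytope G)
    {S : Finset (Sym2 V)} (hS : IsSpanningTree G S) (v : V) :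
    (S.filter fun e => v ∈ e).card ≤ 2 := by
  have h1 : indVec S ∈ stPolytope G := subset_convexHull _ _ ⟨S, mem_spanningTrees.2 hS, rfl⟩
  rw [← h] at h1
  obtain ⟨y, hy, hyS⟩ := h1.2
  have h2 : matchingPolytope G ⊆ {y | starSum v y ≤ 1} := by
    refine convexHull_min ?_ (convex_halfSpace_le (starSum v).isLinear 1)
    rintro x ⟨M, hM, rfl⟩
    simp only [Set.mem_ofPred_eq]
    rw [starSum_indVec]
    exact_mod_cast hM.2 v
  have h3 : starSum v y ≤ 1 := h2 hy
  have h4 := starSum_indVec v S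
  rw [← hyS] at h4
  simp only [map_smul, smul_eq_mul] at h4
  have : ((S.filter fun e => v ∈ e).card : ℝ) ≤ 2 := by linarith
  exact_mod_cast this

/-- degree bound -/
lemma degree_of_tree {G : SimpleGraph V} (hG : G.Connected)
    (h : ∀ S, IsSpanningTree G S → ∀ v, (S.filter fun e => v ∈ e).card ≤ 2) (v : V) :
    G.degree v ≤ 2 := by
  obtain ⟨F, hF1, hF2, hF⟩ := hG.exists_isTree_le_of_le_of_isAcyclic
    (H := G ⊓ SimpleGraph.starGraph v) inf_le_left
    ((SimpleGraph.isAcyclic_starGraph v).anti inf_le_right)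
  obtain ⟨T, hT, hTe⟩ := exists_tree_of_le hF2 hF
  have h1 := dg_eq G T hT.1 v
  have h2 : ∑ u ∈ G.neighborFinset v, (if s(u, v) ∈ T then (1 : ℝ) else 0) = G.degree v := by
    rw [Finset.sum_congr rfl (g := fun _ => (1 : ℝ))]
    · simp
    · intro u hu
      rw [if_pos]
      rw [hTe]
      have hu' : G.Adj v u := by simpa using hu
      exact hF1 ⟨hu'.symm, by simp [hu'.ne']⟩
  rw [h2] at h1
  have := h T hT v
  have h3 : G.degree v = (T.filter fun e => v ∈ e).card := by exact_mod_cast h1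
  omega

lemma card_le_degree {G : SimpleGraph V} {T : Finset (Sym2 V)} (hT : IsSpanningTree G T) (v : V) :
    (T.filter fun e => v ∈ e).card ≤ G.degree v := by
  have h1 := dg_eq G T hT.1 v
  have : ((T.filter fun e => v ∈ e).card : ℝ) ≤ G.degree v := by
    rw [← h1, Finset.sum_boole]
    exact_mod_cast Finset.card_filter_le _ _
  exact_mod_cast this

lemma exists_leaf_tree {G : SimpleGraph V} (v w : V) (hvw : G.Adj v w)
    (hbi : (G.induce ({v}ᶜ : Set V)).Connected) :
    ∃ T, IsSpanningTree G T ∧ (T.filter fun e => v ∈ e).card ≤ 1 := by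
  let H : SimpleGraph V := SimpleGraph.fromEdgeSet {e | e ∈ G.edgeSet ∧ (v ∈ e → e = s(v, w))}
  have hle : H ≤ G := by
    intro a b hab
    exact ((SimpleGraph.fromEdgeSet_adj _).1 hab).1.1
  have hvwH : H.Adj v w := (SimpleGraph.fromEdgeSet_adj _).2 ⟨⟨hvw, fun _ => rfl⟩, hvw.ne⟩
  let φ : G.induce ({v}ᶜ : Set V) →g H :=
    { toFun := fun x => x.1
      map_rel' := by
        intro a b hab
        have hab' : G.Adj a.1 b.1 := hab
        refine (SimpleGraph.fromEdgeSet_adj _).2 ⟨⟨hab', ?_⟩, hab'.ne⟩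
        intro hv
        exfalso
        have ha := a.2
        have hb := b.2
        simp only [Set.mem_compl_iff, Set.mem_singleton_iff] at ha hb
        rcases Sym2.mem_iff.1 hv with h | h
        · exact ha h.symm
        · exact hb h.symm }
  have hw : ∀ x, H.Reachable w x := by
    intro x
    by_cases hx : x = v
    · subst hx; exact hvwH.symm.reachable
    · exact (hbi.preconnected ⟨w, by simpa using hvw.ne'⟩ ⟨x, by simpa using hx⟩).map φ
  have hH : H.Connected := by
    have : Nonempty V := ⟨v⟩
    exact ⟨fun a b => (hw a).symm.trans (hw b)⟩
  obtain ⟨F, hFH, hF⟩ := hH.exists_isTree_le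
  obtain ⟨T, hT, hTe⟩ := exists_tree_of_le (hFH.trans hle) hF
  refine ⟨T, hT, Finset.card_le_one.2 ?_⟩
  have key : ∀ e ∈ T.filter (fun e => v ∈ e), e = s(v, w) := by
    intro e he
    rw [Finset.mem_filter, hTe] at he
    have := SimpleGraph.edgeSet_mono hFH he.1
    simp only [H, SimpleGraph.edgeSet_fromEdgeSet] at this
    exact this.1.2 he.2
  intro a ha b hb
  rw [key a ha, key b hb]

lemma curv_of_degree {G : SimpleGraph V} (hG : G.Connected)
    (hbi : ∀ v : V, (G.induce ({v}ᶜ : Set V)).Connected)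
    (hd : ∀ v, G.degree v ≤ 2) (hnb : ∀ v, ∃ w, G.Adj v w)
    (c : Sym2 V → ℝ) (hc : ∀ e ∈ G.edgeSet, 0 < c e) (v : V) : 0 < curv G c v := by
  rw [curv_pos_iff hG hc]
  obtain ⟨w, hw⟩ := hnb v
  obtain ⟨T, hT, hT1⟩ := exists_leaf_tree v w hw (hbi v)
  refine Finset.sum_pos' ?_ ⟨T, mem_spanningTrees.2 hT, ?_⟩
  · intro S hS
    have h1 := (card_le_degree (mem_spanningTrees.1 hS) v).trans (hd v)
    have h2 : ((S.filter fun e => v ∈ e).card : ℝ) ≤ 2 := by exact_mod_cast h1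
    exact mul_nonneg (by linarith) (w_pos hc hS).le
  · have h2 : ((T.filter fun e => v ∈ e).card : ℝ) ≤ 1 := by exact_mod_cast hT1
    exact mul_pos (by linarith) (w_pos hc (mem_spanningTrees.2 hT))

/-- A tree with maximum degree two splits into two matchings. -/
lemma split_tree {G : SimpleGraph V} [Nontrivial V] {T : Finset (Sym2 V)} (hT : IsSpanningTree G T)
    (hd : ∀ v, (T.filter fun e => v ∈ e).card ≤ 2) :
    ∃ A B : Finset (Sym2 V), IsMatching' G A ∧ IsMatching' G B ∧
      indVec T = indVec A + indVec B := by
  obtain ⟨hTG, hF⟩ := hT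
  set F := SimpleGraph.fromEdgeSet (T : Set (Sym2 V)) with hFdef
  have hadj : ∀ a b, F.Adj a b ↔ s(a, b) ∈ T := by
    intro a b
    rw [hFdef, SimpleGraph.fromEdgeSet_adj]
    refine ⟨fun h => h.1, fun h => ⟨h, ?_⟩⟩
    exact (SimpleGraph.mem_edgeSet G |>.1 (hTG h)).ne
  obtain ⟨r, hr⟩ := hF.exists_vert_degree_one_of_nontrivial
  -- depth of the upper end
  let m : Sym2 V → ℕ := Sym2.lift ⟨fun a b => min (F.dist r a) (F.dist r b), fun a b => min_comm _ _⟩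
  have hm : ∀ a b, m s(a, b) = min (F.dist r a) (F.dist r b) := fun _ _ => rfl
  have hone : ∀ v a b, F.Adj v a → F.Adj v b → m s(v, a) % 2 = m s(v, b) % 2 → a = b := by
    intro v a b ha hb hab
    by_contra hne
    have ea := hF.dist_eq_dist_add_one_of_adj r ha
    have eb := hF.dist_eq_dist_add_one_of_adj r hb
    rw [hm, hm] at hab
    by_cases hvr : v = r
    · subst hvr
      rw [SimpleGraph.degree_eq_one_iff_existsUnique_adj] at hr
      exact hne (hr.unique ha hb)
    -- a unique parent
    obtain ⟨p, hpp, hpl⟩ := hF.connected.exists_path_of_dist r v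
    have hpn : ¬ p.Nil := fun h => hvr h.eq.symm
    have hpar : ∀ x, F.Adj v x → F.dist r v = F.dist r x + 1 → x = p.penultimate := by
      intro x hx hxd
      refine hF.isAcyclic.eq_penultimate_of_adj_end hpp hx ?_
      by_contra hxs
      obtain ⟨q, hqp, hql⟩ := hF.connected.exists_path_of_dist r x
      have hv := hF.isAcyclic.mem_support_of_ne_mem_support_of_adj_of_isPath hqp hpp hx.symm hxs
      have := hF.isAcyclic.path_concat hpp hqp hx hv
      have h2 := congrArg SimpleGraph.Walk.length this
      rw [SimpleGraph.Walk.length_concat] at h2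
      omega
    have hpad : F.Adj v p.penultimate := (p.adj_penultimate hpn).symm
    have hpd : F.dist r v = F.dist r p.penultimate + 1 := by
      have h1 := SimpleGraph.dist_le p.dropLast
      have h2 := hF.dist_eq_dist_add_one_of_adj r hpad
      have h3 : p.dropLast.length ≤ p.length := by
        simp
      omega
    have hca : F.dist r a = F.dist r v + 1 ∧ F.dist r b = F.dist r v + 1 := by
      rcases ea with ea | ea <;> rcases eb with eb | eb
      · exact absurd ((hpar a ha ea).trans (hpar b hb eb).symm) hne
      · omega
      · omega
      · exact ⟨ea, eb⟩
    have hap : a ≠ p.penultimate := by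
      intro h; rw [h] at hca; omega
    have hbp : b ≠ p.penultimate := by
      intro h; rw [h] at hca; omega
    have h3 : 2 < (T.filter fun e => v ∈ e).card := by
      rw [Finset.two_lt_card]
      refine ⟨s(v, a), ?_, s(v, b), ?_, s(v, p.penultimate), ?_, ?_, ?_, ?_⟩
      · simp [(hadj v a).1 ha]
      · simp [(hadj v b).1 hb]
      · simp [(hadj v p.penultimate).1 hpad]
      · exact fun h => hne (Sym2.congr_right.1 h)
      · exact fun h => hap (Sym2.congr_right.1 h)
      · exact fun h => hbp (Sym2.congr_right.1 h)
    have := hd v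
    omega
  have hmatch : ∀ k, IsMatching' G (T.filter fun e => m e % 2 = k) := by
    intro k
    refine ⟨fun e he => hTG (Finset.mem_filter.1 he).1, fun v => Finset.card_le_one.2 ?_⟩
    intro e he e' he'
    simp only [Finset.mem_filter] at he he'
    obtain ⟨a, rfl⟩ := Sym2.mem_iff_exists.1 he.2
    obtain ⟨b, rfl⟩ := Sym2.mem_iff_exists.1 he'.2
    rw [hone v a b ((hadj v a).2 he.1.1) ((hadj v b).2 he'.1.1) (he.1.2.trans he'.1.2.symm)]
  refine ⟨_, _, hmatch 0, hmatch 1, ?_⟩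
  funext e
  simp only [indVec, Pi.add_apply, Finset.mem_filter]
  by_cases he : e ∈ T
  · rcases Nat.mod_two_eq_zero_or_one (m e) with h | h <;> simp [he, h]
  · simp [he]

open scoped Pointwise in
lemma polytope_of_degree {G : SimpleGraph V} [Nontrivial V] (hd : ∀ v, G.degree v ≤ 2) :
    stPolytope G ∩ (2 : ℝ) • matchingPolytope G = stPolytope G := by
  rw [Set.inter_eq_left]
  refine convexHull_min ?_ ((convex_convexHull ℝ _).smul 2)
  rintro x ⟨T, hT, rfl⟩
  rw [mem_spanningTrees] at hT
  obtain ⟨A, B, hA, hB, hAB⟩ := split_tree hT fun v => (card_le_degree hT v).trans (hd v)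
  refine ⟨(1 / 2 : ℝ) • indVec A + (1 / 2 : ℝ) • indVec B, ?_, ?_⟩
  · have hA' : indVec A ∈ matchingPolytope G := subset_convexHull _ _ ⟨A, hA, rfl⟩
    have hB' : indVec B ∈ matchingPolytope G := subset_convexHull _ _ ⟨B, hB, rfl⟩
    exact (convex_convexHull ℝ _) hA' hB' (by norm_num) (by norm_num) (by norm_num)
  · rw [hAB]
    funext e
    simp
    ring

lemma degree_of_iso {G : SimpleGraph V}
    (h : (∃ n : ℕ, 3 ≤ n ∧ Nonempty (G ≃g SimpleGraph.cycleGraph n)) ∨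
          Nonempty (G ≃g (⊤ : SimpleGraph (Fin 2)))) (v : V) : G.degree v ≤ 2 := by
  rcases h with ⟨n, hn, ⟨f⟩⟩ | ⟨⟨f⟩⟩
  · obtain ⟨k, rfl⟩ := Nat.exists_eq_add_of_le' hn
    rw [← f.degree_eq v, SimpleGraph.cycleGraph_degree_three_le]
  · have h := G.degree_lt_card_verts v
    have h2 := Fintype.card_congr f.toEquiv
    rw [Fintype.card_fin] at h2
    omega

lemma iso_of_degree {G : SimpleGraph V} [Nontrivial V] (hG : G.Connected)
    (hbi : ∀ v : V, (G.induce ({v}ᶜ : Set V)).Connected)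
    (hd : ∀ v, G.degree v ≤ 2) :
    (∃ n : ℕ, 3 ≤ n ∧ Nonempty (G ≃g SimpleGraph.cycleGraph n)) ∨
          Nonempty (G ≃g (⊤ : SimpleGraph (Fin 2))) := by
  by_cases hac : G.IsAcyclic
  · right
    have hT : G.IsTree := ⟨hG, hac⟩
    obtain ⟨u, hu⟩ := hT.exists_vert_degree_one_of_nontrivial
    rw [SimpleGraph.degree_eq_one_iff_existsUnique_adj] at hu
    obtain ⟨w, huw, hw⟩ := hu
    have hall : ∀ x, x = u ∨ x = w := by
      intro x
      by_contra hx
      push Not at hx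
      have hxw : x ∈ ({w}ᶜ : Set V) := by simpa using hx.2
      have huw' : u ∈ ({w}ᶜ : Set V) := by simpa using huw.ne
      have : Nontrivial ({w}ᶜ : Set V) :=
        ⟨⟨⟨x, hxw⟩, ⟨u, huw'⟩, fun h => hx.1 (congrArg Subtype.val h)⟩⟩
      have hdp := (hbi w).preconnected.exists_adj_of_nontrivial ⟨u, huw'⟩
      obtain ⟨y, hy⟩ := hdp
      have hy' : G.Adj u y.1 := hy
      exact y.2 (hw _ hy')
    have hcard : Fintype.card V = 2 := by
      have : (Finset.univ : Finset V) = {u, w} := by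
        ext x; simpa using hall x
      rw [← Finset.card_univ, this, Finset.card_pair huw.ne]
    have e : V ≃ Fin 2 := Fintype.equivFinOfCardEq hcard
    refine ⟨⟨e, ?_⟩⟩
    intro a b
    simp only [SimpleGraph.top_adj, ne_eq, EmbeddingLike.apply_eq_iff_eq]
    constructor
    · intro hab
      rcases hall a with rfl | rfl <;> rcases hall b with rfl | rfl
      · exact absurd rfl hab
      · exact huw
      · exact huw.symm
      · exact absurd rfl hab
    · intro h; exact h.ne
  · left
    rw [SimpleGraph.isAcyclic_iff_free_cycleGraph] at hac
    push Not at hac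
    obtain ⟨n, hn, hfree⟩ := hac
    refine ⟨n, hn, ?_⟩
    obtain ⟨f⟩ := hfree
    obtain ⟨k, rfl⟩ := Nat.exists_eq_add_of_le' hn
    have hinj : Function.Injective f := f.injective
    have himg : ∀ i, G.neighborFinset (f i) = ((SimpleGraph.cycleGraph (k+3)).neighborFinset i).image f := by
      intro i
      symm
      apply Finset.eq_of_subset_of_card_le
      · intro x hx
        simp only [Finset.mem_image, SimpleGraph.mem_neighborFinset] at hx ⊢
        obtain ⟨j, hj, rfl⟩ := hx
        exact f.toHom.map_adj hj
      · rw [Finset.card_image_of_injective _ hinj, SimpleGraph.card_neighborFinset_eq_degree,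
          SimpleGraph.card_neighborFinset_eq_degree, SimpleGraph.cycleGraph_degree_three_le]
        exact hd _
    have hadj : ∀ i x, G.Adj (f i) x → ∃ j, (SimpleGraph.cycleGraph (k+3)).Adj i j ∧ f j = x := by
      intro i x hx
      have : x ∈ G.neighborFinset (f i) := by simpa using hx
      rw [himg] at this
      simpa using this
    have hsurj : Function.Surjective f := by
      intro x
      have hr := hG.preconnected (f 0) x
      rw [SimpleGraph.reachable_iff_reflTransGen] at hr
      induction hr with
      | refl => exact ⟨0, rfl⟩
      | tail _ h ih =>
        obtain ⟨i, rfl⟩ := ih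
        obtain ⟨j, -, hj⟩ := hadj i _ h
        exact ⟨j, hj⟩
    refine ⟨SimpleGraph.Iso.symm ⟨Equiv.ofBijective f ⟨hinj, hsurj⟩, ?_⟩⟩
    intro a b
    change G.Adj (f a) (f b) ↔ _
    constructor
    · intro h
      obtain ⟨j, hj, hjb⟩ := hadj a _ h
      rwa [hinj hjb] at hj
    · intro h
      exact f.toHom.map_adj h

end RCurv

open scoped Pointwise in
open RCurv in
/-- For a biconnected graph `G` with at least one edge, the following are equivalent:
(1) `P(G) ∩ 2M(G) = P(G)`; (2) every choice of positive edge weights has everywhere positive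
resistance curvature; (3) `G` is a cycle graph on `n ≥ 3` vertices or a single edge `K₂`. -/
theorem TDM_eq_stPolytope_iff {V : Type*} [Fintype V] [DecidableEq V]
    (G : SimpleGraph V) (hG : G.Connected)
    (hbi : ∀ v : V, (G.induce ({v}ᶜ : Set V)).Connected)
    (hE : G.edgeSet.Nonempty) :
    ((stPolytope G ∩ (2 : ℝ) • matchingPolytope G = stPolytope G) ↔
        (∀ c : Sym2 V → ℝ, (∀ e ∈ G.edgeSet, 0 < c e) → ∀ v : V, 0 < curv G c v)) ∧
      ((∀ c : Sym2 V → ℝ, (∀ e ∈ G.edgeSet, 0 < c e) → ∀ v : V, 0 < curv G c v) ↔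
        ((∃ n : ℕ, 3 ≤ n ∧ Nonempty (G ≃g SimpleGraph.cycleGraph n)) ∨
          Nonempty (G ≃g (⊤ : SimpleGraph (Fin 2))))) := by
  obtain ⟨e, he⟩ := hE
  have hnt : Nontrivial V := by
    induction e with
    | _ a b => exact ⟨⟨a, b, G.ne_of_adj he⟩⟩
  have h12 : (∀ v, G.degree v ≤ 2) →
      (∀ c : Sym2 V → ℝ, (∀ e ∈ G.edgeSet, 0 < c e) → ∀ v : V, 0 < curv G c v) := fun hd =>
    curv_of_degree hG hbi hd fun v => hG.preconnected.exists_adj_of_nontrivial v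
  have h2 : (∀ c : Sym2 V → ℝ, (∀ e ∈ G.edgeSet, 0 < c e) → ∀ v : V, 0 < curv G c v) →
      (∀ v, G.degree v ≤ 2) := fun h => degree_of_tree hG fun _ hS => tree_of_curv hG h hS
  exact ⟨⟨fun h => h12 (degree_of_tree hG fun _ hS => tree_of_polytope h hS),
    fun h => polytope_of_degree (h2 h)⟩,
    ⟨fun h => iso_of_degree hG hbi (h2 h), fun h => h12 (degree_of_iso h)⟩⟩
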